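/- arXiv:2110.09014 — 8 statements merged into one kernel-verified Lean document; each statement's English description precedes it below -/
import Mathlib

section
/- Let B be a KTB-algebra with natural closure operator γ(x) = □◇x, and let n ≥ 1 be a natural number. Suppose there exists x ∈ B with x ≠ 0 and ◇x ≠ 1, and that for every x ∈ B with x ≠ 0 one has ◇ⁿx = 1 (where ◇ⁿ denotes the n-fold iterate of ◇). Then there exists a γ-closed element y ∈ B with ◇y ≠ 1 and ◇◇y = 1. -/
/-!
Iterating `◇` on `x` reaches `⊤` after finitely many steps, and not within the first one, so just
before the end there is an iterate `z` of `x` with `◇z ≠ ⊤` and `◇◇z = ⊤`. Its closure `y = γ z = □◇z`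
satisfies `◇y = ◇z`: one inequality is `z ≤ γ z`, the other is `◇□a ≤ a` at `a = ◇z`. So `y` inherits
both properties of `z`, and `γ y = □◇y = □◇z = y`.
-/


/-- In a KTB-algebra with natural closure operator `γ(x) = □◇x`: if there is an
`x ≠ 0` with `◇x ≠ 1`, and `◇ⁿx = 1` for every `x ≠ 0` (for some fixed `n ≥ 1`),
then there is a `γ`-closed `y` with `◇y ≠ 1` and `◇◇y = 1`. -/
theorem exists_gamma_closed_witness {B : Type*} [BooleanAlgebra B] (dia : B → B)
    (h0 : dia ⊥ = ⊥)
    (hadd : ∀ x y : B, dia (x ⊔ y) = dia x ⊔ dia y)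
    (hT : ∀ x : B, x ≤ dia x)
    (hB : ∀ x : B, x ≤ (dia (dia x)ᶜ)ᶜ)
    (n : ℕ) (hn : 1 ≤ n)
    (hex : ∃ x : B, x ≠ ⊥ ∧ dia x ≠ ⊤)
    (hall : ∀ x : B, x ≠ ⊥ → dia^[n] x = ⊤) :
    ∃ y : B, y = (dia (dia y)ᶜ)ᶜ ∧ dia y ≠ ⊤ ∧ dia (dia y) = ⊤ := by
  classical
  have mono : ∀ {a b : B}, a ≤ b → dia a ≤ dia b := fun {a b} h => by
    rw [← sup_eq_right.mpr h, hadd]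
    exact le_sup_left
  -- `γ z = □◇z` has the same `◇` as `z`; the bound `◇□a ≤ a` is the dual of `hB`.
  have dia_gamma : ∀ z : B, dia (dia (dia z)ᶜ)ᶜ = dia z := fun z =>
    le_antisymm (by simpa using le_compl_comm.mp (hB (dia z)ᶜ)) (mono (hB z))
  obtain ⟨x, hx, hdx⟩ := hex
  -- It suffices to find `z` with `◇z ≠ ⊤` and `◇◇z = ⊤`.
  obtain ⟨z, hz, hzz⟩ : ∃ z : B, dia z ≠ ⊤ ∧ dia (dia z) = ⊤ := by
    have hk : ∃ k, dia^[k + 1] x = ⊤ :=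
      ⟨n - 1, by rw [Nat.sub_add_cancel hn]; exact hall x hx⟩
    -- The first exponent `k + 1` at which the iterates of `x` reach `⊤` has `k ≠ 0`, as `◇x ≠ ⊤`.
    have hspec := Nat.find_spec hk
    have hmin := fun m => @Nat.find_min _ _ hk m
    generalize Nat.find hk = k at hspec hmin
    obtain _ | m := k
    · exact absurd hspec hdx
    · refine ⟨dia^[m] x, ?_, ?_⟩
      · simpa only [Function.iterate_succ_apply'] using hmin m m.lt_succ_self
      · simpa only [Function.iterate_succ_apply'] using hspec
  refine ⟨(dia (dia z)ᶜ)ᶜ, ?_, ?_, ?_⟩ <;> rw [dia_gamma]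
  exacts [hz, hzz]
end

section
/- Let N ⊆ 𝔼. Then the sets {a}, {b₁}, {b₃}, {c₁}, {d}, {ℓᵢ} for every i ≥ 0, {uⱼ} for every j ≥ 1, {b₂} ∪ {ℓᵢ : i ≥ 0}, and {c₂} ∪ {uᵢ : i ≥ 1} all belong to D_N. -/
/-!
Working outwards from `d`, one application of `◇` at a time isolates `c₁`, `b₁` and `a`, hence also
`S = {b₂, b₃} ∪ L` (the remaining neighbours of `a`) and `T = {c₂} ∪ U` (everything else). The
points of `S` without a neighbour in `T` are exactly `b₃` and `ℓ₀`, and `ℓ₁` is the only further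
neighbour of these apart from `a`; so `ℓ₁`, `ℓ₀`, `b₃` and `u₁` are definable (`DN.core`).

The rest is an induction on the ladder (`DN.rung`). Suppose `ℓ_{m-2}`, `ℓ_{m-1}`, `u_{m-1}` are
isolated, with `m ≥ 2` even. Then `ℓ_m` is the only new neighbour of `u_{m-1}` in `L`.
* If `m ∉ N`, the path `ℓ_m, u_m, ℓ_{m+1}, u_{m+1}` is followed, each vertex being the only new
  neighbour of the previous one.
* If `m ∈ N`, then `ℓ_m` yields only the pair `{u_m, u_{m+1}}`, whose new neighbours are `ℓ_{m+1}`
  and `ℓ_{m+2}`. Both of these see `u_{m+1}` but not `u_m`, which separates the pair; and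
  `ℓ_{m+2}` sees `u_{m+2}` whereas `ℓ_{m+1}` has no neighbour in `T` other than `u_{m+1}`.
-/

/-- Vertices of the frame `𝔽_N`.  `u n` denotes the vertex `u_{n+1}` of the paper
(so that `u 0, u 1, …` enumerate `u₁, u₂, …`), and `l n` denotes `ℓ_n`. -/
inductive V : Type
  | a | b1 | b2 | b3 | c1 | c2 | d
  | u (n : ℕ)
  | l (n : ℕ)
  deriving DecidableEq

/-- `𝔼`, the set of positive even integers. -/
def EE : Set ℕ := {n | Even n ∧ 0 < n}

/-- The edges of the frame `𝔽_N` (one direction of each edge; loops are added in `R`).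
Recall that `V.u n` denotes `u_{n+1}`. -/
inductive E (N : Set ℕ) : V → V → Prop
  | ab1 : E N .a .b1
  | ab2 : E N .a .b2
  | ab3 : E N .a .b3
  | b1c1 : E N .b1 .c1
  | b2c2 : E N .b2 .c2
  | c1d : E N .c1 .d
  | l0l1 : E N (.l 0) (.l 1)
  /-- `{a, ℓᵢ}` for every `i ≥ 0` -/
  | al (i : ℕ) : E N .a (.l i)
  /-- `{ℓᵢ, uᵢ}` for every `i ≥ 1` (here `i = j + 1`) -/
  | lu (j : ℕ) : E N (.l (j + 1)) (.u j)
  /-- `{ℓᵢ, u_{i-1}}` for every even `i ≥ 2` (here `i = j + 2`) -/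
  | ldown (j : ℕ) (hj : Even j) : E N (.l (j + 2)) (.u j)
  /-- `{ℓᵢ, u_{i+1}}` for every `i ∈ N` -/
  | lN (i : ℕ) (hi : i ∈ N) : E N (.l i) (.u i)
  /-- `{ℓ_{i+1}, uᵢ}` for every even `i ≥ 2` with `i ∉ N` (here `i = j + 2`) -/
  | lnN (j : ℕ) (hj : Even j) (hjN : j + 2 ∉ N) : E N (.l (j + 3)) (.u (j + 1))

/-- The accessibility relation `R_N`: the reflexive symmetric closure of the edges. -/
def R (N : Set ℕ) (x y : V) : Prop := x = y ∨ E N x y ∨ E N y x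

/-- `◇_N X = {w : ∃ v ∈ X, v R_N w}`. -/
def dia (N : Set ℕ) (X : Set V) : Set V := {w | ∃ v ∈ X, R N v w}

/-- `D_N`: the smallest collection of subsets of `W` containing `{d}` and closed under
union, complement and `◇_N`. -/
inductive DN (N : Set ℕ) : Set V → Prop
  | base : DN N {V.d}
  | union {X Y : Set V} : DN N X → DN N Y → DN N (X ∪ Y)
  | compl {X : Set V} : DN N X → DN N Xᶜ
  | diam {X : Set V} : DN N X → DN N (dia N X)

theorem DN.inter {N : Set ℕ} {X Y : Set V} (hX : DN N X) (hY : DN N Y) : DN N (X ∩ Y) := by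
  rw [← compl_compl (X ∩ Y), Set.compl_inter]
  exact (hX.compl.union hY.compl).compl

theorem DN.diff {N : Set ℕ} {X Y : Set V} (hX : DN N X) (hY : DN N Y) : DN N (X \ Y) :=
  hX.inter hY.compl

/-- The (directed) edge relation `E N` as a table indexed by the kinds of the two vertices; unlike
the inductive predicate, it is computed by `simp`. See `E_iff`. -/
def edgeTable (N : Set ℕ) : V → V → Prop
  | .a, .b1 => True
  | .a, .b2 => True
  | .a, .b3 => True
  | .b1, .c1 => True
  | .b2, .c2 => True
  | .c1, .d => True
  | .l i, .l j => i = 0 ∧ j = 1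
  | .a, .l _ => True
  | .l i, .u j => i = j + 1 ∨ (i = j + 2 ∧ Even j) ∨ (i = j ∧ j ∈ N) ∨
      (i = j + 2 ∧ Odd j ∧ j + 1 ∉ N)
  | _, _ => False

theorem E_iff {N : Set ℕ} (x y : V) : E N x y ↔ edgeTable N x y := by
  constructor
  · intro h
    cases h with
    | lnN j hj hjN => exact Or.inr (Or.inr (Or.inr ⟨rfl, hj.add_one, hjN⟩))
    | _ => simp_all [edgeTable]
  · intro h
    cases x <;> cases y <;> simp only [edgeTable] at h
    case l.u i j =>
      rcases h with rfl | ⟨rfl, h⟩ | ⟨rfl, h⟩ | ⟨rfl, ⟨k, rfl⟩, h⟩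
      · exact .lu j
      · exact .ldown j h
      · exact .lN _ h
      · exact .lnN (2 * k) (even_two_mul k) h
    case l.l i j =>
      obtain ⟨rfl, rfl⟩ := h
      exact .l0l1
    all_goals constructor

theorem mem_dia {N : Set ℕ} (X : Set V) (y : V) :
    y ∈ dia N X ↔ y ∈ X ∨ ∃ x ∈ X, edgeTable N x y ∨ edgeTable N y x := by
  simp only [dia, R, E_iff, Set.mem_ofPred_eq]
  constructor
  · rintro ⟨x, hx, rfl | h⟩
    · exact Or.inl hx
    · exact Or.inr ⟨x, hx, h⟩
  · rintro (h | ⟨x, hx, h⟩)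
    · exact ⟨y, h, Or.inl rfl⟩
    · exact ⟨x, hx, Or.inr h⟩

/-- The part of the statement not involving the induction along the ladder. -/
theorem DN.core {N : Set ℕ} (hN : N ⊆ EE) :
    DN N {V.a} ∧ DN N {V.b1} ∧ DN N {V.b3} ∧ DN N {V.c1} ∧
    DN N {V.l 0} ∧ DN N {V.l 1} ∧ DN N {V.u 0} ∧
    DN N ({V.b2} ∪ Set.range V.l) ∧ DN N ({V.c2} ∪ Set.range V.u) := by
  have h0 : 0 ∉ N := fun h => absurd (hN h).2 (lt_irrefl 0)
  have h1 : 1 ∉ N := fun h => absurd (hN h).1 (by decide)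
  have hd : DN N {V.d} := .base
  have hc1 : DN N {V.c1} := by
    convert hd.diam.diff hd using 1
    ext x; cases x <;> simp [mem_dia, edgeTable]
  have hb1 : DN N {V.b1} := by
    convert hc1.diam.diff (hc1.union hd) using 1
    ext x; cases x <;> simp [mem_dia, edgeTable]
  have ha : DN N {V.a} := by
    convert hb1.diam.diff (hb1.union hc1) using 1
    ext x; cases x <;> simp [mem_dia, edgeTable]
  have hS : DN N ({V.b2, V.b3} ∪ Set.range V.l) := by
    convert ha.diam.diff (ha.union hb1) using 1
    ext x; cases x <;> simp [mem_dia, edgeTable]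
  have hT : DN N ({V.c2} ∪ Set.range V.u) := by
    convert ((hS.union ha).union (hb1.union (hc1.union hd))).compl using 1
    ext x; cases x <;> simp
  have hp : DN N {V.b3, V.l 0} := by
    convert hS.diff hT.diam using 1
    ext x; cases x with
    | l i =>
      rcases i with _ | i
      · simp [mem_dia, edgeTable, h0]
      -- `ℓ_{i+1}` is adjacent to `u_{i+1}`
      · simp [mem_dia, edgeTable]
    | _ => simp [mem_dia, edgeTable]
  have hl1 : DN N {V.l 1} := by
    convert hp.diam.diff (hp.union ha) using 1
    ext x; cases x <;> simp [mem_dia, edgeTable]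
    all_goals grind
  have hl0 : DN N {V.l 0} := by
    convert (hl1.diam.inter hS).diff hl1 using 1
    ext x; cases x <;> simp [mem_dia, edgeTable]
    grind
  have hb3 : DN N {V.b3} := by
    convert hp.diff hl0 using 1
    ext x; cases x <;> simp
  have hu0 : DN N {V.u 0} := by
    convert hl1.diam.inter hT using 1
    ext x; cases x <;> simp [mem_dia, edgeTable]
    grind
  have hL : DN N ({V.b2} ∪ Set.range V.l) := by
    convert hS.diff hb3 using 1
    ext x; cases x <;> simp
  exact ⟨ha, hb1, hb3, hc1, hl0, hl1, hu0, hL, hT⟩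

/-- The inductive step along the ladder, with `j = m - 2` even. Recall that `V.u i` is `u_{i+1}`,
so `V.u j` is `u_{m-1}`, and `V.u (j + 1)`, `V.u (j + 2)` are `u_m`, `u_{m+1}`. -/
theorem DN.rung {N : Set ℕ} (hN : N ⊆ EE)
    (hL : DN N ({V.b2} ∪ Set.range V.l)) (hT : DN N ({V.c2} ∪ Set.range V.u))
    {j : ℕ} (hj : Even j) (hl0 : DN N {V.l j}) (hl1 : DN N {V.l (j + 1)}) (hu0 : DN N {V.u j}) :
    DN N {V.l (j + 2)} ∧ DN N {V.l (j + 3)} ∧ DN N {V.u (j + 1)} ∧ DN N {V.u (j + 2)} := by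
  have hev : ∀ i ∈ N, Even i := fun i hi => (hN hi).1
  have hl2 : DN N {V.l (j + 2)} := by
    convert (hu0.diam.inter hL).diff (hl0.union hl1) using 1
    ext x; cases x <;> simp [mem_dia, edgeTable]
    grind
  by_cases hm : j + 2 ∈ N
  · have hP : DN N {V.u (j + 1), V.u (j + 2)} := by
      convert (hl2.diam.inter hT).diff hu0 using 1
      ext x; cases x <;> simp [mem_dia, edgeTable]
      grind
    have hQ : DN N {V.l (j + 3), V.l (j + 4)} := by
      convert (hP.diam.inter hL).diff hl2 using 1
      ext x; cases x <;> simp [mem_dia, edgeTable]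
      grind
    have hu2 : DN N {V.u (j + 2)} := by
      convert hQ.diam.inter hP using 1
      ext x; cases x <;> simp [mem_dia, edgeTable]
      grind
    have hu1 : DN N {V.u (j + 1)} := by
      convert hP.diff hu2 using 1
      ext x; cases x <;> simp
    have hl3 : DN N {V.l (j + 3)} := by
      convert hQ.diff (hT.diff hu2).diam using 1
      ext x; cases x with
      | l i =>
        simp only [mem_dia, edgeTable, Set.mem_singleton_iff, Set.mem_sdiff, Set.mem_insert_iff,
          Set.mem_union, Set.mem_range, V.l.injEq, reduceCtorEq, false_or]
        constructor
        · rintro rfl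
          refine ⟨Or.inl rfl, ?_⟩
          rintro (⟨h, -⟩ | ⟨x, ⟨rfl | ⟨k, rfl⟩, hx⟩, h⟩)
          · simp at h
          · simp at h
          · simp at h hx
            grind
        · rintro ⟨rfl | rfl, h⟩
          · rfl
          -- `ℓ_{m+2}` is adjacent to `u_{m+2}`, which is `V.u (j + 3)`
          · exact absurd (Or.inr ⟨V.u (j + 3), by simp, by simp⟩) h
      | _ => simp
    exact ⟨hl2, hl3, hu1, hu2⟩
  · have hu1 : DN N {V.u (j + 1)} := by
      convert (hl2.diam.inter hT).diff hu0 using 1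
      ext x; cases x <;> simp [mem_dia, edgeTable]
      grind
    have hl3 : DN N {V.l (j + 3)} := by
      convert (hu1.diam.inter hL).diff hl2 using 1
      ext x; cases x <;> simp [mem_dia, edgeTable]
      grind
    have hu2 : DN N {V.u (j + 2)} := by
      convert (hl3.diam.inter hT).diff hu1 using 1
      ext x; cases x <;> simp [mem_dia, edgeTable]
      grind
    exact ⟨hl2, hl3, hu1, hu2⟩

/-- For `N ⊆ 𝔼`, the sets `{a}, {b₁}, {b₃}, {c₁}, {d}`, all singletons `{ℓᵢ}` (`i ≥ 0`)
and `{uⱼ}` (`j ≥ 1`), as well as `{b₂} ∪ L` and `{c₂} ∪ U`, all belong to `D_N`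
(recall `V.u n` denotes `u_{n+1}`, so `Set.range V.u = {uⱼ : j ≥ 1}`). -/
theorem singletons_mem_DN (N : Set ℕ) (hN : N ⊆ EE) :
    DN N {V.a} ∧ DN N {V.b1} ∧ DN N {V.b3} ∧ DN N {V.c1} ∧ DN N {V.d} ∧
    (∀ i : ℕ, DN N {V.l i}) ∧
    (∀ n : ℕ, DN N {V.u n}) ∧
    DN N ({V.b2} ∪ Set.range V.l) ∧
    DN N ({V.c2} ∪ Set.range V.u) := by
  obtain ⟨ha, hb1, hb3, hc1, hl0, hl1, hu0, hL, hT⟩ := DN.core hN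
  have ladder : ∀ k : ℕ, DN N {V.l (2 * k)} ∧ DN N {V.l (2 * k + 1)} ∧ DN N {V.u (2 * k)} := by
    intro k
    induction k with
    | zero => exact ⟨hl0, hl1, hu0⟩
    | succ k ih =>
      obtain ⟨h2, h3, -, h4⟩ := DN.rung hN hL hT (even_two_mul k) ih.1 ih.2.1 ih.2.2
      exact ⟨h2, h3, h4⟩
  refine ⟨ha, hb1, hb3, hc1, .base, fun i => ?_, fun n => ?_, hL, hT⟩
  · obtain ⟨k, rfl | rfl⟩ := i.even_or_odd'
    · exact (ladder k).1
    · exact (ladder k).2.1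
  · obtain ⟨k, rfl | rfl⟩ := n.even_or_odd'
    · exact (ladder k).2.2
    · obtain ⟨h0, h1, hu⟩ := ladder k
      exact (DN.rung hN hL hT (even_two_mul k) h0 h1 hu).2.2.1
end

section
/- Let N ⊆ 𝔼. Then the collection D_N is infinite. -/
namespace DN

variable {N : Set ℕ} {X Y : Set V}

theorem inter_s8 (hX : DN N X) (hY : DN N Y) : DN N (X ∩ Y) := by
  have h := (hX.compl.union hY.compl).compl
  rwa [Set.compl_union, compl_compl, compl_compl] at h

theorem diff_s8 (hX : DN N X) (hY : DN N Y) : DN N (X \ Y) :=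
  hX.inter_s8 hY.compl

end DN

/-- The neighbours of `a` other than `b₁`. -/
def lowerLayer : Set V := {.b2, .b3} ∪ Set.range V.l

/-- The vertices at distance two from `a` on the side away from `d`. -/
def upperLayer : Set V := {.c2} ∪ Set.range V.u

/-- An explicit form of the edge relation `E`, one direction of each edge. -/
def edge (N : Set ℕ) : V → V → Prop
  | .a, .b1 | .a, .b2 | .a, .b3 | .b1, .c1 | .b2, .c2 | .c1, .d | .a, .l _ => True
  | .l i, .l k => i = 0 ∧ k = 1
  | .l i, .u k => i = k + 1 ∨ (Even k ∧ i = k + 2) ∨ (i = k ∧ i ∈ N) ∨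
      (Odd k ∧ i = k + 2 ∧ k + 1 ∉ N)
  | _, _ => False

theorem E_iff_edge {N : Set ℕ} {x y : V} : E N x y ↔ edge N x y := by
  constructor
  · rintro (_ | _ | _ | _ | _ | _ | _ | _ | _ | ⟨j, hj⟩ | ⟨i, hi⟩ | ⟨j, hj, hjN⟩)
    all_goals simp [edge, *]
  · intro h
    cases x <;> cases y <;> simp only [edge] at h <;> try constructor
    · case l.u i k =>
      rcases h with rfl | ⟨hk, rfl⟩ | ⟨rfl, hi⟩ | ⟨hk, rfl, hn⟩
      · exact .lu k
      · exact .ldown k hk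
      · exact .lN _ hi
      · obtain ⟨m, rfl⟩ := hk
        exact .lnN (2 * m) (even_two_mul m) hn
    · case l.l i k =>
      obtain ⟨rfl, rfl⟩ := h
      exact .l0l1

theorem mem_dia_singleton {N : Set ℕ} {x w : V} :
    w ∈ dia N {x} ↔ x = w ∨ edge N x w ∨ edge N w x := by
  simp [dia, R, E_iff_edge]

theorem mem_dia_pair {N : Set ℕ} {x y w : V} :
    w ∈ dia N {x, y} ↔
      (x = w ∨ edge N x w ∨ edge N w x) ∨ (y = w ∨ edge N y w ∨ edge N w y) := by
  simp [dia, R, E_iff_edge]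

theorem mem_dia_lowerLayer {N : Set ℕ} {w : V} :
    w ∈ dia N lowerLayer ↔ w ∈ dia N {.b2, .b3} ∨ ∃ i, w ∈ dia N {.l i} := by
  simp [dia, lowerLayer, or_and_right, exists_or]

theorem mem_dia_upperLayer {N : Set ℕ} {w : V} :
    w ∈ dia N upperLayer ↔ w ∈ dia N {.c2} ∨ ∃ k, w ∈ dia N {.u k} := by
  simp [dia, upperLayer, or_and_right, exists_or]

/-- From `d`, repeatedly take neighbours and discard what is already isolated. -/
theorem layers_definable (N : Set ℕ) :
    DN N {.a} ∧ DN N lowerLayer ∧ DN N upperLayer := by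
  have hd : DN N {.d} := .base
  have hc : DN N {.c1} := by
    convert hd.diam.diff_s8 hd using 1
    ext w; cases w <;> simp [mem_dia_singleton, edge]
  have hb : DN N {.b1} := by
    convert (hc.diam.diff_s8 hc).diff_s8 hd using 1
    ext w; cases w <;> simp [mem_dia_singleton, edge]
  have ha : DN N {.a} := by
    convert (hb.diam.diff_s8 hb).diff_s8 hc using 1
    ext w; cases w <;> simp [mem_dia_singleton, edge]
  have hl : DN N lowerLayer := by
    convert (ha.diam.diff_s8 ha).diff_s8 hb using 1
    ext w; cases w <;> simp [mem_dia_singleton, edge, lowerLayer]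
  refine ⟨ha, hl, ?_⟩
  convert (hl.diam.diff_s8 hl).diff_s8 ha using 1
  ext w
  cases w <;> simp only [Set.mem_sdiff, mem_dia_lowerLayer] <;>
    simp [mem_dia_singleton, mem_dia_pair, edge, lowerLayer, upperLayer]

/-- The climb starts from `ℓ₀` and `b₃`, the only points of the lower layer without a neighbour
in the upper one. The singletons obtained are those of `ℓ₂` and of `u₁`, which is `V.u 0`. -/
theorem start_definable {N : Set ℕ} (hN : N ⊆ EE) : DN N {.l 2} ∧ DN N {.u 0} := by
  obtain ⟨ha, hl, hu⟩ := layers_definable N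
  have h0 : 0 ∉ N := fun h => by simpa [EE] using hN h
  have h1 : 1 ∉ N := fun h => by simpa [EE] using hN h
  have hbl : DN N {.b3, .l 0} := by
    convert hl.diff_s8 hu.diam using 1
    ext w
    cases w <;> simp only [Set.mem_sdiff, mem_dia_upperLayer] <;>
      simp [mem_dia_singleton, edge, lowerLayer]
    case l i =>
      constructor
      · rintro rfl k
        simp [h0]
      · intro h
        by_contra hi
        exact (h (i - 1)).1 (by omega)
  have hl1 : DN N {.l 1} := by
    convert (hbl.diam.diff_s8 hbl).diff_s8 ha using 1
    ext w; cases w <;> simp [mem_dia_pair, edge]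
    all_goals grind
  have hu0 : DN N {.u 0} := by
    convert hl1.diam.inter_s8 hu using 1
    ext w; cases w <;> simp [mem_dia_singleton, edge, upperLayer]
    grind
  refine ⟨?_, hu0⟩
  convert (hu0.diam.inter_s8 hl).diff_s8 hl1 using 1
  ext w; cases w <;> simp [mem_dia_singleton, edge, lowerLayer]
  grind

/-- With `i = j + 2`, the singletons of `ℓᵢ` and `u_{i-1}` define those of `ℓ_{i+2}` and
`u_{i+1}`; recall that `V.u j` is the vertex `u_{j+1}`. -/
theorem step_definable {N : Set ℕ} (hN : N ⊆ EE) {j : ℕ} (hj : Even j)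
    (h : DN N {.l (j + 2)} ∧ DN N {.u j}) :
    DN N {.l (j + 4)} ∧ DN N {.u (j + 2)} := by
  obtain ⟨-, hl, hu⟩ := layers_definable N
  obtain ⟨hlj, huj⟩ := h
  have hE : ∀ i ∈ N, Even i := fun i hi => (hN hi).1
  by_cases hjN : j + 2 ∈ N
  · have hA : DN N {.u (j + 1), .u (j + 2)} := by
      convert (hlj.diam.inter_s8 hu).diff_s8 huj using 1
      ext w; cases w <;> simp [mem_dia_singleton, edge, upperLayer]
      grind
    have hB : DN N {.l (j + 3), .l (j + 4)} := by
      convert (hA.diam.inter_s8 hl).diff_s8 hlj using 1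
      ext w; cases w <;> simp [mem_dia_pair, edge, lowerLayer]
      grind
    have hu2 : DN N {.u (j + 2)} := by
      convert hA.inter_s8 hB.diam using 1
      ext w; cases w <;> simp [mem_dia_pair, edge]
      grind
    refine ⟨?_, hu2⟩
    convert hB.inter_s8 ((hB.diam.inter_s8 hu).diff_s8 hu2).diam using 1
    ext w
    constructor
    · rintro rfl
      -- `V.u (j + 3)` is joined to `V.l (j + 4)` and differs from `V.u (j + 2)`
      refine ⟨by simp, .u (j + 3), ?_, ?_⟩
      · simp [mem_dia_pair, edge, upperLayer]
      · simp [R, E_iff_edge, edge]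
    · rintro ⟨rfl | rfl, v, ⟨⟨-, hv⟩, hv'⟩, hR⟩
      · exfalso
        cases v <;> simp [R, E_iff_edge, edge, upperLayer] at hv hv' hR
        grind
      · rfl
  · have hu1 : DN N {.u (j + 1)} := by
      convert (hlj.diam.inter_s8 hu).diff_s8 huj using 1
      ext w; cases w <;> simp [mem_dia_singleton, edge, upperLayer]
      grind
    have hl3 : DN N {.l (j + 3)} := by
      convert (hu1.diam.inter_s8 hl).diff_s8 hlj using 1
      ext w; cases w <;> simp [mem_dia_singleton, edge, lowerLayer]
      grind
    have hu2 : DN N {.u (j + 2)} := by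
      convert (hl3.diam.inter_s8 hu).diff_s8 hu1 using 1
      ext w; cases w <;> simp [mem_dia_singleton, edge, upperLayer]
      grind
    refine ⟨?_, hu2⟩
    convert (hu2.diam.inter_s8 hl).diff_s8 hl3 using 1
    ext w; cases w <;> simp [mem_dia_singleton, edge, lowerLayer]
    grind

/-- For `N ⊆ 𝔼`, the collection `D_N` is infinite. -/
theorem DN_infinite (N : Set ℕ) (hN : N ⊆ EE) :
    {X : Set V | DN N X}.Infinite := by
  have key : ∀ k : ℕ, DN N {.l (2 * k + 2)} ∧ DN N {.u (2 * k)} := by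
    intro k
    induction k with
    | zero => exact start_definable hN
    | succ k ih => exact step_definable hN (even_two_mul k) ih
  refine Set.infinite_of_injective_forall_mem (f := fun k : ℕ => ({.l (2 * k + 2)} : Set V))
    (fun m n h => ?_) (fun k => (key k).1)
  have := V.l.inj (Set.singleton_injective h)
  omega
end

section
/- Let N ⊆ 𝔼. Then for every nonempty X ⊆ W, ◇_N⁵ X = W (where ◇_N⁵ is the 5-fold iterate of ◇_N). In particular, every vertex of 𝔽_N other than d is joined to a by a path of length at most 2. -/
theorem R_refl (N : Set ℕ) (x : V) : R N x x := Or.inl rfl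

theorem R_symm {N : Set ℕ} {x y : V} (h : R N x y) : R N y x := by
  rcases h with h | h | h
  · exact Or.inl h.symm
  · exact Or.inr (Or.inr h)
  · exact Or.inr (Or.inl h)

theorem E.toR {N : Set ℕ} {x y : V} (h : E N x y) : R N x y := Or.inr (Or.inl h)

theorem R_two_of_ne_d (N : Set ℕ) (v : V) (hv : v ≠ V.d) :
    ∃ w : V, R N V.a w ∧ R N w v := by
  cases v with
  | a => exact ⟨_, R_refl N _, R_refl N _⟩
  | b1 => exact ⟨_, E.ab1.toR, R_refl N _⟩
  | b2 => exact ⟨_, E.ab2.toR, R_refl N _⟩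
  | b3 => exact ⟨_, E.ab3.toR, R_refl N _⟩
  | c1 => exact ⟨_, E.ab1.toR, E.b1c1.toR⟩
  | c2 => exact ⟨_, E.ab2.toR, E.b2c2.toR⟩
  | d => exact absurd rfl hv
  | u n => exact ⟨_, (E.al (n + 1)).toR, (E.lu n).toR⟩
  | l n => exact ⟨_, (E.al n).toR, R_refl N _⟩

theorem R_three (N : Set ℕ) (v : V) :
    ∃ p q : V, R N V.a p ∧ R N p q ∧ R N q v := by
  by_cases hv : v = V.d
  · subst hv
    exact ⟨_, _, E.ab1.toR, E.b1c1.toR, E.c1d.toR⟩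
  · obtain ⟨p, h₁, h₂⟩ := R_two_of_ne_d N v hv
    exact ⟨p, v, h₁, h₂, R_refl N v⟩

theorem mem_dia_five {N : Set ℕ} {X : Set V} {x p q r s w : V} (hx : x ∈ X)
    (h₁ : R N x p) (h₂ : R N p q) (h₃ : R N q r) (h₄ : R N r s) (h₅ : R N s w) :
    w ∈ (dia N)^[5] X :=
  ⟨s, ⟨r, ⟨q, ⟨p, ⟨x, hx, h₁⟩, h₂⟩, h₃⟩, h₄⟩, h₅⟩

/-- For `N ⊆ 𝔼`, `◇_N⁵ X = W` for every nonempty `X ⊆ W`; in particular every vertex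
other than `d` is joined to `a` by a path of length at most `2`. -/
theorem dia_five_eq_univ (N : Set ℕ) (hN : N ⊆ EE) :
    (∀ X : Set V, X.Nonempty → (dia N)^[5] X = Set.univ) ∧
    (∀ v : V, v ≠ V.d → R N V.a v ∨ ∃ w : V, R N V.a w ∧ R N w v) := by
  refine ⟨fun X ⟨x, hx⟩ => Set.eq_univ_of_forall fun w => ?_,
    fun v hv => Or.inr (R_two_of_ne_d N v hv)⟩
  by_cases hxd : x = V.d
  · by_cases hwd : w = V.d
    · subst hxd hwd
      exact mem_dia_five hx (R_refl N _) (R_refl N _) (R_refl N _) (R_refl N _) (R_refl N _)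
    · obtain ⟨p, q, h₁, h₂, h₃⟩ := R_three N x
      obtain ⟨r, h₄, h₅⟩ := R_two_of_ne_d N w hwd
      exact mem_dia_five hx (R_symm h₃) (R_symm h₂) (R_symm h₁) h₄ h₅
  · obtain ⟨p, h₁, h₂⟩ := R_two_of_ne_d N x hxd
    obtain ⟨q, r, h₃, h₄, h₅⟩ := R_three N w
    exact mem_dia_five hx (R_symm h₂) (R_symm h₁) h₃ h₄ h₅
end

section
/- Let N ⊆ 𝔼 and let X ∈ D_N be γ-closed (i.e., X = □_N ◇_N X) with ◇_N X ≠ W and ◇_N ◇_N X = W. Then ◇_N(∼X) ≠ W. -/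
theorem R.eq_of_b3 {N : Set ℕ} {y : V} (h : R N y .b3) : y = .b3 ∨ y = .a := by
  rcases h with h | h | h
  · exact Or.inl h
  · cases h; exact Or.inr rfl
  · cases h

theorem R.eq_of_u {N : Set ℕ} {y : V} {n : ℕ} (h : R N y (.u n)) :
    y = .u n ∨ ∃ m, n ≤ m ∧ y = .l m := by
  rcases h with h | h | h
  · exact Or.inl h
  · cases h <;> exact Or.inr ⟨_, by omega, rfl⟩
  · cases h

/-- The bound `2 ≤ m` excludes the ends of the edge `{ℓ₀, ℓ₁}`. -/
theorem R.eq_of_l {N : Set ℕ} {y : V} {m : ℕ} (hm : 2 ≤ m) (h : R N y (.l m)) :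
    y = .l m ∨ y = .a ∨ ∃ n, m ≤ n + 2 ∧ y = .u n := by
  rcases h with h | h | h
  · exact Or.inl h
  · cases h
    · omega
    · exact Or.inr (Or.inl rfl)
  · cases h
    · omega
    all_goals exact Or.inr (Or.inr ⟨_, by omega, rfl⟩)

theorem mem_dia_of_mem {N : Set ℕ} {X : Set V} {w : V} (h : w ∈ X) : w ∈ dia N X :=
  ⟨w, h, Or.inl rfl⟩

/-- The sequence `uᵢ` is eventually in `X` or eventually outside `X` (according to `p`), and
likewise `ℓᵢ` (according to `q`). -/
def EvConst (X : Set V) : Prop :=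
  ∃ (K : ℕ) (p q : Prop), ∀ n, K ≤ n → ((V.u n ∈ X ↔ p) ∧ (V.l n ∈ X ↔ q))

theorem EvConst.dia {N : Set ℕ} {X : Set V} (h : EvConst X) : EvConst (dia N X) := by
  obtain ⟨K, p, q, h⟩ := h
  refine ⟨K + 2, p ∨ q, q ∨ V.a ∈ X ∨ p, fun n hn => ⟨⟨?_, ?_⟩, ⟨?_, ?_⟩⟩⟩
  · rintro ⟨v, hv, hr⟩
    rcases hr.eq_of_u with rfl | ⟨m, hm, rfl⟩
    · exact Or.inl ((h n (by omega)).1.1 hv)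
    · exact Or.inr ((h m (by omega)).2.1 hv)
  · rintro (hp | hq)
    · exact mem_dia_of_mem ((h n (by omega)).1.2 hp)
    · exact ⟨.l (n + 1), (h _ (by omega)).2.2 hq, Or.inr (Or.inl (.lu n))⟩
  · rintro ⟨v, hv, hr⟩
    rcases hr.eq_of_l (by omega) with rfl | rfl | ⟨m, hm, rfl⟩
    · exact Or.inl ((h n (by omega)).2.1 hv)
    · exact Or.inr (Or.inl hv)
    · exact Or.inr (Or.inr ((h m (by omega)).1.1 hv))
  · rintro (hq | ha | hp)
    · exact mem_dia_of_mem ((h n (by omega)).2.2 hq)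
    · exact ⟨.a, ha, Or.inr (Or.inl (.al n))⟩
    · obtain ⟨k, rfl⟩ : ∃ k, n = k + 1 := ⟨n - 1, by omega⟩
      exact ⟨.u k, (h _ (by omega)).1.2 hp, Or.inr (Or.inr (.lu k))⟩

theorem DN.evConst {N : Set ℕ} {X : Set V} (h : DN N X) : EvConst X := by
  induction h with
  | base => exact ⟨0, False, False, fun n _ => by simp⟩
  | union _ _ ihX ihY =>
    obtain ⟨K, p, q, h⟩ := ihX
    obtain ⟨L, r, s, h'⟩ := ihY
    refine ⟨max K L, p ∨ r, q ∨ s, fun n hn => ?_⟩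
    have h₁ := h n (le_trans (le_max_left _ _) hn)
    have h₂ := h' n (le_trans (le_max_right _ _) hn)
    exact ⟨or_congr h₁.1 h₂.1, or_congr h₁.2 h₂.2⟩
  | compl _ ih =>
    obtain ⟨K, p, q, h⟩ := ih
    exact ⟨K, ¬p, ¬q, fun n hn => ⟨not_congr (h n hn).1, not_congr (h n hn).2⟩⟩
  | diam _ ih => exact ih.dia

/-- For `N ⊆ 𝔼`, if `X ∈ D_N` is `γ`-closed (`X = □_N ◇_N X`) with `◇_N X ≠ W` and
`◇_N ◇_N X = W`, then `◇_N(∼X) ≠ W`. -/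
theorem dia_compl_ne_univ (N : Set ℕ) (hN : N ⊆ EE)
    (X : Set V) (hX : DN N X)
    (hclosed : X = (dia N (dia N X)ᶜ)ᶜ)
    (h1 : dia N X ≠ Set.univ)
    (h2 : dia N (dia N X) = Set.univ) :
    dia N Xᶜ ≠ Set.univ := by
  intro h3
  have hcl : ∀ w, (∀ y, R N y w → y ∈ dia N X) → w ∈ X := by
    intro w hw
    rw [hclosed]
    rintro ⟨v, hv, hr⟩
    exact hv (hw v hr)
  have hout : ∀ w, ∃ v, v ∉ X ∧ R N v w := fun w => Set.eq_univ_iff_forall.1 h3 w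
  have hdd : ∀ w, w ∈ dia N (dia N X) := Set.eq_univ_iff_forall.1 h2
  have ha : V.a ∉ X := by
    intro ha
    have hb : V.b3 ∈ X := by
      refine hcl _ fun y hy => ?_
      rcases hy.eq_of_b3 with rfl | rfl
      · exact ⟨.a, ha, Or.inr (Or.inl .ab3)⟩
      · exact mem_dia_of_mem ha
    obtain ⟨v, hv, hr⟩ := hout .b3
    rcases hr.eq_of_b3 with rfl | rfl
    · exact hv hb
    · exact hv ha
  have had : V.a ∈ dia N X := by
    obtain ⟨v, hv, hr⟩ := hdd .b3
    rcases hr.eq_of_b3 with rfl | rfl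
    · obtain ⟨w, hw, hr⟩ := hv
      rcases hr.eq_of_b3 with rfl | rfl
      · exact ⟨.b3, hw, Or.inr (Or.inr .ab3)⟩
      · exact mem_dia_of_mem hw
    · exact hv
  obtain ⟨K, p, q, h⟩ := hX.evConst
  by_cases hq : q
  · -- far-out `ℓ`'s lie in `X`, hence so does `u K`, together with its closed neighbourhood
    have hl : ∀ m, K ≤ m → V.l m ∈ X := fun m hm => (h m hm).2.2 hq
    have hu : V.u K ∈ X := by
      refine hcl _ fun y hy => ?_
      rcases hy.eq_of_u with rfl | ⟨m, hm, rfl⟩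
      · exact ⟨.l (K + 1), hl _ (by omega), Or.inr (Or.inl (.lu K))⟩
      · exact mem_dia_of_mem (hl m hm)
    obtain ⟨v, hv, hr⟩ := hout (.u K)
    rcases hr.eq_of_u with rfl | ⟨m, hm, rfl⟩
    · exact hv hu
    · exact hv (hl m hm)
  · by_cases hp : p
    · have hu : ∀ m, K ≤ m → V.u m ∈ X := fun m hm => (h m hm).1.2 hp
      refine hq ((h (K + 2) (by omega)).2.1 (hcl _ fun y hy => ?_))
      rcases hy.eq_of_l (by omega) with rfl | rfl | ⟨n, hn, rfl⟩
      · exact ⟨.u (K + 1), hu _ (by omega), Or.inr (Or.inr (.lu (K + 1)))⟩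
      · exact had
      · exact mem_dia_of_mem (hu n (by omega))
    · -- far-out `u`'s and `ℓ`'s avoid `X`; the shift by `2` keeps the ball of radius `2` far out
      have hl : ∀ m, K ≤ m → V.l m ∉ X := fun m hm hx => hq ((h m hm).2.1 hx)
      have hu : ∀ m, K ≤ m → V.u m ∉ X := fun m hm hx => hp ((h m hm).1.1 hx)
      obtain ⟨v, ⟨w, hw, hr'⟩, hr⟩ := hdd (.u (K + 2))
      rcases hr.eq_of_u with rfl | ⟨m, hm, rfl⟩
      · rcases hr'.eq_of_u with rfl | ⟨m, hm, rfl⟩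
        · exact hu _ (by omega) hw
        · exact hl _ (by omega) hw
      · rcases hr'.eq_of_l (by omega) with rfl | rfl | ⟨n, hn, rfl⟩
        · exact hl _ (by omega) hw
        · exact ha hw
        · exact hu _ (by omega) hw
end

section
/- Let M, N ⊆ 𝔼 with M ≠ N. Then there do not exist both an embedding of D_M into D_N and an embedding of D_N into D_M. -/
/-- An embedding of the algebra `D_M` into the algebra `D_N`: a map defined on `D_M`,
taking values in `D_N`, injective on `D_M`, preserving `∅`, `W`, union, complement
and `◇`. -/
def IsEmbedding (M N : Set ℕ) (u : Set V → Set V) : Prop :=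
  (∀ X : Set V, DN M X → DN N (u X)) ∧
  (∀ X Y : Set V, DN M X → DN M Y → u X = u Y → X = Y) ∧
  u ∅ = ∅ ∧
  u Set.univ = Set.univ ∧
  (∀ X Y : Set V, DN M X → DN M Y → u (X ∪ Y) = u X ∪ u Y) ∧
  (∀ X : Set V, DN M X → u Xᶜ = (u X)ᶜ) ∧
  (∀ X : Set V, DN M X → u (dia M X) = dia N (u X))

/-! ### Neighbourhoods -/

section Neighbourhoods

variable (N : Set ℕ) (X : Set V)

theorem mem_dia_a : V.a ∈ dia N X ↔
    V.a ∈ X ∨ V.b1 ∈ X ∨ V.b2 ∈ X ∨ V.b3 ∈ X ∨ ∃ i, V.l i ∈ X := by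
  constructor
  · rintro ⟨v, hv, rfl | h | h⟩ <;> first | tauto | (cases h <;> tauto)
  · rintro (h | h | h | h | ⟨i, h⟩)
    · exact ⟨_, h, Or.inl rfl⟩
    · exact ⟨_, h, Or.inr (Or.inr .ab1)⟩
    · exact ⟨_, h, Or.inr (Or.inr .ab2)⟩
    · exact ⟨_, h, Or.inr (Or.inr .ab3)⟩
    · exact ⟨_, h, Or.inr (Or.inr (.al i))⟩

theorem mem_dia_b1 : V.b1 ∈ dia N X ↔ V.b1 ∈ X ∨ V.a ∈ X ∨ V.c1 ∈ X := by
  constructor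
  · rintro ⟨v, hv, rfl | h | h⟩ <;> first | tauto | (cases h; all_goals tauto)
  · rintro (h | h | h)
    · exact ⟨_, h, Or.inl rfl⟩
    · exact ⟨_, h, Or.inr (Or.inl .ab1)⟩
    · exact ⟨_, h, Or.inr (Or.inr .b1c1)⟩

theorem mem_dia_b2 : V.b2 ∈ dia N X ↔ V.b2 ∈ X ∨ V.a ∈ X ∨ V.c2 ∈ X := by
  constructor
  · rintro ⟨v, hv, rfl | h | h⟩ <;> first | tauto | (cases h; all_goals tauto)
  · rintro (h | h | h)
    · exact ⟨_, h, Or.inl rfl⟩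
    · exact ⟨_, h, Or.inr (Or.inl .ab2)⟩
    · exact ⟨_, h, Or.inr (Or.inr .b2c2)⟩

theorem mem_dia_b3 : V.b3 ∈ dia N X ↔ V.b3 ∈ X ∨ V.a ∈ X := by
  constructor
  · rintro ⟨v, hv, rfl | h | h⟩ <;> first | tauto | (cases h; all_goals tauto)
  · rintro (h | h)
    · exact ⟨_, h, Or.inl rfl⟩
    · exact ⟨_, h, Or.inr (Or.inl .ab3)⟩

theorem mem_dia_c1 : V.c1 ∈ dia N X ↔ V.c1 ∈ X ∨ V.b1 ∈ X ∨ V.d ∈ X := by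
  constructor
  · rintro ⟨v, hv, rfl | h | h⟩ <;> first | tauto | (cases h; all_goals tauto)
  · rintro (h | h | h)
    · exact ⟨_, h, Or.inl rfl⟩
    · exact ⟨_, h, Or.inr (Or.inl .b1c1)⟩
    · exact ⟨_, h, Or.inr (Or.inr .c1d)⟩

theorem mem_dia_c2 : V.c2 ∈ dia N X ↔ V.c2 ∈ X ∨ V.b2 ∈ X := by
  constructor
  · rintro ⟨v, hv, rfl | h | h⟩ <;> first | tauto | (cases h; all_goals tauto)
  · rintro (h | h)
    · exact ⟨_, h, Or.inl rfl⟩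
    · exact ⟨_, h, Or.inr (Or.inl .b2c2)⟩

theorem mem_dia_d : V.d ∈ dia N X ↔ V.d ∈ X ∨ V.c1 ∈ X := by
  constructor
  · rintro ⟨v, hv, rfl | h | h⟩ <;> first | tauto | (cases h; all_goals tauto)
  · rintro (h | h)
    · exact ⟨_, h, Or.inl rfl⟩
    · exact ⟨_, h, Or.inr (Or.inl .c1d)⟩

theorem mem_dia_u (n : ℕ) : V.u n ∈ dia N X ↔
    V.u n ∈ X ∨ V.l (n + 1) ∈ X ∨ (Even n ∧ V.l (n + 2) ∈ X) ∨ (n ∈ N ∧ V.l n ∈ X) ∨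
      (¬ Even n ∧ n + 1 ∉ N ∧ V.l (n + 2) ∈ X) := by
  constructor
  · rintro ⟨v, hv, rfl | h | h⟩
    · exact Or.inl hv
    · cases h with
      | lu => tauto
      | ldown _ hj => tauto
      | lN _ hi => tauto
      | lnN j hj hjN =>
        refine Or.inr (Or.inr (Or.inr (Or.inr ⟨?_, hjN, hv⟩)))
        simpa [Nat.even_add_one] using hj
    · cases h
  · rintro (h | h | ⟨h1, h⟩ | ⟨h1, h⟩ | ⟨h1, h2, h⟩)
    · exact ⟨_, h, Or.inl rfl⟩
    · exact ⟨_, h, Or.inr (Or.inl (.lu n))⟩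
    · exact ⟨_, h, Or.inr (Or.inl (.ldown n h1))⟩
    · exact ⟨_, h, Or.inr (Or.inl (.lN n h1))⟩
    · obtain _ | j := n
      · simp at h1
      · exact ⟨_, h, Or.inr (Or.inl (.lnN j (by simpa [Nat.even_add_one] using h1) h2))⟩

theorem mem_dia_l (k : ℕ) : V.l k ∈ dia N X ↔
    V.l k ∈ X ∨ V.a ∈ X ∨ (k = 0 ∧ V.l 1 ∈ X) ∨ (k = 1 ∧ V.l 0 ∈ X) ∨
      (∃ j, V.u j ∈ X ∧ (k = j + 1 ∨ (k = j + 2 ∧ Even j) ∨ (k = j ∧ k ∈ N) ∨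
        (k = j + 2 ∧ ¬ Even j ∧ j + 1 ∉ N))) := by
  constructor
  · rintro ⟨v, hv, rfl | h | h⟩
    · exact Or.inl hv
    · cases h <;> tauto
    · cases h with
      | l0l1 => tauto
      | lu j => exact Or.inr (Or.inr (Or.inr (Or.inr ⟨_, hv, Or.inl rfl⟩)))
      | ldown j hj => exact Or.inr (Or.inr (Or.inr (Or.inr ⟨_, hv, Or.inr (Or.inl ⟨rfl, hj⟩)⟩)))
      | lN _ hi =>
        exact Or.inr (Or.inr (Or.inr (Or.inr ⟨_, hv, Or.inr (Or.inr (Or.inl ⟨rfl, hi⟩))⟩)))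
      | lnN j hj hjN =>
        refine Or.inr (Or.inr (Or.inr (Or.inr ⟨_, hv, Or.inr (Or.inr (Or.inr ⟨rfl, ?_, hjN⟩))⟩)))
        simpa [Nat.even_add_one] using hj
  · rintro (h | h | ⟨rfl, h⟩ | ⟨rfl, h⟩ | ⟨j, h, rfl | ⟨rfl, h1⟩ | ⟨rfl, h1⟩ | ⟨rfl, h1, h2⟩⟩)
    · exact ⟨_, h, Or.inl rfl⟩
    · exact ⟨_, h, Or.inr (Or.inl (.al k))⟩
    · exact ⟨_, h, Or.inr (Or.inr .l0l1)⟩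
    · exact ⟨_, h, Or.inr (Or.inl .l0l1)⟩
    · exact ⟨_, h, Or.inr (Or.inr (.lu j))⟩
    · exact ⟨_, h, Or.inr (Or.inr (.ldown j h1))⟩
    · exact ⟨_, h, Or.inr (Or.inr (.lN k h1))⟩
    · obtain _ | j := j
      · simp at h1
      · exact ⟨_, h, Or.inr (Or.inr (.lnN j (by simpa [Nat.even_add_one] using h1) h2))⟩

end Neighbourhoods

/-- The vertices at distance `4` from `d`: `b₂`, `b₃` and all `ℓᵢ`. -/
def lev4 : Set V := {x | x = .b2 ∨ x = .b3 ∨ ∃ n, x = .l n}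

/-- The vertices at distance `5` from `d`: `c₂` and all `uᵢ`. -/
def lev5 : Set V := {x | x = .c2 ∨ ∃ n, x = .u n}

theorem mem_lev4 (x : V) : x ∈ lev4 ↔ x = .b2 ∨ x = .b3 ∨ ∃ n, x = .l n := Iff.rfl

theorem mem_lev5 (x : V) : x ∈ lev5 ↔ x = .c2 ∨ ∃ n, x = .u n := Iff.rfl

/-! ### Transporting modal terms along an embedding -/

/-- `X` belongs to `D_M` and `u` sends it to `Y`.  Pairs of values of the same modal term over
`𝔽_M` and `𝔽_N` are related in this way once their arguments are. -/
def Corr (M : Set ℕ) (u : Set V → Set V) (X Y : Set V) : Prop := DN M X ∧ u X = Y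

section Transport

variable {M N : Set ℕ} {u : Set V → Set V} {X X' Y Y' : Set V}

theorem Corr.union (hu : IsEmbedding M N u) (h : Corr M u X Y) (h' : Corr M u X' Y') :
    Corr M u (X ∪ X') (Y ∪ Y') :=
  ⟨h.1.union h'.1, by rw [hu.2.2.2.2.1 _ _ h.1 h'.1, h.2, h'.2]⟩

theorem Corr.compl (hu : IsEmbedding M N u) (h : Corr M u X Y) : Corr M u Xᶜ Yᶜ :=
  ⟨h.1.compl, by rw [hu.2.2.2.2.2.1 _ h.1, h.2]⟩

theorem Corr.dia (hu : IsEmbedding M N u) (h : Corr M u X Y) : Corr M u (dia M X) (dia N Y) :=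
  ⟨h.1.diam, by rw [hu.2.2.2.2.2.2 _ h.1, h.2]⟩

theorem Corr.inter (hu : IsEmbedding M N u) (h : Corr M u X Y) (h' : Corr M u X' Y') :
    Corr M u (X ∩ X') (Y ∩ Y') := by
  have := ((h.compl hu).union hu (h'.compl hu)).compl hu
  simpa [Set.compl_union] using this

theorem Corr.diff (hu : IsEmbedding M N u) (h : Corr M u X Y) (h' : Corr M u X' Y') :
    Corr M u (X \ X') (Y \ Y') :=
  h.inter hu (h'.compl hu)

/-- Replaces the two sets of a related pair by explicit descriptions of them. -/
theorem Corr.of_eq (h : Corr M u X Y) (hX : X = X') (hY : Y = Y') : Corr M u X' Y' :=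
  hX ▸ hY ▸ h

end Transport

theorem isEmbedding_id (M : Set ℕ) : IsEmbedding M M id :=
  ⟨fun _ h => h, fun _ _ _ _ h => h, rfl, rfl, fun _ _ _ _ => rfl, fun _ _ => rfl, fun _ _ => rfl⟩

/-! ### The sets generated first from `d` -/

theorem dia1_d (N : Set ℕ) : dia N {.d} = {.d, .c1} := by
  ext x
  cases x <;> simp [mem_dia_a, mem_dia_b1, mem_dia_b2, mem_dia_b3, mem_dia_c1, mem_dia_c2,
    mem_dia_d, mem_dia_u, mem_dia_l]

theorem dia2_d (N : Set ℕ) : dia N {.d, .c1} = {.d, .c1, .b1} := by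
  ext x
  cases x <;> simp [mem_dia_a, mem_dia_b1, mem_dia_b2, mem_dia_b3, mem_dia_c1, mem_dia_c2,
    mem_dia_d, mem_dia_u, mem_dia_l]

theorem dia3_d (N : Set ℕ) : dia N {.d, .c1, .b1} = {.d, .c1, .b1, .a} := by
  ext x
  cases x <;> simp [mem_dia_a, mem_dia_b1, mem_dia_b2, mem_dia_b3, mem_dia_c1, mem_dia_c2,
    mem_dia_d, mem_dia_u, mem_dia_l]

theorem dia4_d (N : Set ℕ) : dia N {.d, .c1, .b1, .a} = lev5ᶜ := by
  ext x
  cases x <;> simp [mem_dia_a, mem_dia_b1, mem_dia_b2, mem_dia_b3, mem_dia_c1, mem_dia_c2,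
    mem_dia_d, mem_dia_u, mem_dia_l, mem_lev5]

/-- `b₃` and `ℓ₀` are the vertices at distance `4` from `d` with no neighbour at distance `5`. -/
theorem lev4_no_up {N : Set ℕ} (hN : N ⊆ EE) : lev4 \ dia N lev5 = {.b3, .l 0} := by
  have h0 : 0 ∉ N := fun h => by simpa [EE] using hN h
  ext x
  cases x with
  | l k =>
    obtain _ | k := k
    · simp [mem_dia_l, mem_lev4, mem_lev5, h0]
    · simp [mem_dia_l, mem_lev4, mem_lev5]
  | _ => simp [mem_dia_a, mem_dia_b1, mem_dia_b2, mem_dia_b3, mem_dia_c1, mem_dia_c2,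
    mem_dia_d, mem_dia_u, mem_lev4, mem_lev5]

/-- If `u {d} = {d}`, then `u` fixes the two outer levels and the start of the zigzag. -/
theorem fix_base {M N : Set ℕ} (hM : M ⊆ EE) (hN : N ⊆ EE) {u : Set V → Set V}
    (hu : IsEmbedding M N u) (hd : u {.d} = {.d}) :
    Corr M u lev4 lev4 ∧ Corr M u lev5 lev5 ∧ Corr M u {.l 0} {.l 0} ∧ Corr M u {.l 1} {.l 1} ∧
      Corr M u {.l 2} {.l 2} ∧ Corr M u {.u 0} {.u 0} := by
  have k0 : Corr M u {.d} {.d} := ⟨.base, hd⟩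
  have k1 := (k0.dia hu).of_eq (dia1_d M) (dia1_d N)
  have k2 := (k1.dia hu).of_eq (dia2_d M) (dia2_d N)
  have k3 := (k2.dia hu).of_eq (dia3_d M) (dia3_d N)
  have k4 := (k3.dia hu).of_eq (dia4_d M) (dia4_d N)
  have k5 : Corr M u lev5 lev5 := (k4.compl hu).of_eq (compl_compl _) (compl_compl _)
  have e4 : lev5ᶜ \ ({.d, .c1, .b1, .a} : Set V) = lev4 := by
    ext x; cases x <;> simp [mem_lev4, mem_lev5]
  have m4 := (k4.diff hu k3).of_eq e4 e4
  have t := (m4.diff hu (k5.dia hu)).of_eq (lev4_no_up hM) (lev4_no_up hN)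
  have e1 (K : Set ℕ) : (dia K {.b3, .l 0} ∩ lev4) \ {.b3, .l 0} = {.l 1} := by
    ext x
    cases x <;> simp [mem_dia_a, mem_dia_b1, mem_dia_b2, mem_dia_b3, mem_dia_c1, mem_dia_c2,
      mem_dia_d, mem_dia_u, mem_dia_l, mem_lev4]
    grind
  have l1 := (((t.dia hu).inter hu m4).diff hu t).of_eq (e1 M) (e1 N)
  have e0 (K : Set ℕ) : dia K {.l 1} ∩ {.b3, .l 0} = {.l 0} := by
    ext x
    cases x <;> simp [mem_dia_b3, mem_dia_l]
    grind
  have l0 := ((l1.dia hu).inter hu t).of_eq (e0 M) (e0 N)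
  have eu {K : Set ℕ} (hK : K ⊆ EE) : dia K {.l 1} ∩ lev5 = {.u 0} := by
    have h1 : 1 ∉ K := fun h => by simpa [EE] using hK h
    ext x
    cases x <;> simp [mem_dia_c2, mem_dia_u, mem_lev5]
    grind
  have u0 := ((l1.dia hu).inter hu k5).of_eq (eu hM) (eu hN)
  have e2 {K : Set ℕ} (hK : K ⊆ EE) : (dia K {.u 0} ∩ lev4) \ {.l 1} = {.l 2} := by
    have h0 : 0 ∉ K := fun h => by simpa [EE] using hK h
    ext x
    cases x <;> simp [mem_dia_b2, mem_dia_b3, mem_dia_l, mem_lev4]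
    grind
  have l2 := (((u0.dia hu).inter hu m4).diff hu l1).of_eq (e2 hM) (e2 hN)
  exact ⟨m4, k5, l0, l1, l2, u0⟩

/-! ### Locating the image of `d` -/

theorem mem_dia2_of_a {N : Set ℕ} {X : Set V} (ha : V.a ∈ X) {y : V} (hy : y ≠ .d) :
    y ∈ dia N (dia N X) := by
  cases y with
  | a => simp [mem_dia_a, ha]
  | u n => simp [mem_dia_u, mem_dia_l, ha]
  | l n => simp [mem_dia_l, ha]
  | d => exact absurd rfl hy
  | _ => simp [mem_dia_b1, mem_dia_b2, mem_dia_b3, mem_dia_c1, mem_dia_c2, ha]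

theorem a_mem_dia2 {N : Set ℕ} {X : Set V} {x : V} (hx : x ∈ X) (hxd : x ≠ .d) :
    V.a ∈ dia N (dia N X) := by
  cases x with
  | u n =>
    rw [mem_dia_a]
    refine Or.inr (Or.inr (Or.inr (Or.inr ⟨n + 1, ?_⟩)))
    rw [mem_dia_l]
    exact Or.inr (Or.inr (Or.inr (Or.inr ⟨n, hx, Or.inl rfl⟩)))
  | l n =>
    rw [mem_dia_a, mem_dia_a]
    exact Or.inl (Or.inr (Or.inr (Or.inr (Or.inr ⟨n, hx⟩))))
  | d => exact absurd rfl hxd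
  | _ => simp [mem_dia_a, mem_dia_b1, mem_dia_b2, mem_dia_b3, hx]

/-- An embedding sends the generator to the generator: if `u {d}` contained another vertex, then
`b₁` would lie in `u {a}`, but it sees too few vertices for that. -/
theorem image_d {M N : Set ℕ} (hM : M ⊆ EE) {u : Set V → Set V}
    (hu : IsEmbedding M N u) : u {.d} = {.d} := by
  have hid := isEmbedding_id M
  obtain ⟨-, -, l0, l1, -, -⟩ := fix_base hM hM hid rfl
  have r0 : Corr M u {.d} (u {.d}) := ⟨.base, rfl⟩
  have r1 := (r0.dia hu).of_eq (dia1_d M) rfl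
  have r2 := (r1.dia hu).of_eq (dia2_d M) rfl
  have r3 := (r2.dia hu).of_eq (dia3_d M) rfl
  have r4 := (r3.dia hu).of_eq (dia4_d M) rfl
  set S := u {.d} with hS
  have hempty : DN M ∅ := by
    have := (r0.inter hu (r0.compl hu)).1
    simpa using this
  have huniv : DN M Set.univ := by simpa using hempty.compl
  have hSne : S.Nonempty := by
    rw [Set.nonempty_iff_ne_empty]
    intro h
    have := hu.2.1 _ _ DN.base hempty (by rw [← hS, h, hu.2.2.1])
    simp at this
  have h4 : dia N (dia N (dia N (dia N S))) ≠ Set.univ := by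
    intro h
    have := hu.2.1 _ _ r4.1 huniv (by rw [r4.2, h, hu.2.2.2.1])
    have hc : V.c2 ∈ lev5ᶜ := this ▸ Set.mem_univ _
    simp [mem_lev5] at hc
  by_cases hx : ∃ x ∈ S, x ≠ .d
  · exfalso
    obtain ⟨x, hxS, hxd⟩ := hx
    have ha : V.a ∈ dia N (dia N S) := a_mem_dia2 hxS hxd
    have hd : V.d ∉ dia N (dia N (dia N (dia N S))) := by
      intro hd
      apply h4
      rw [Set.eq_univ_iff_forall]
      intro y
      by_cases hy : y = .d
      · rwa [hy]
      · exact mem_dia2_of_a ha hy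
    have hb2 : V.b1 ∉ dia N (dia N S) := fun h => hd (by
      rw [mem_dia_d, mem_dia_c1]; tauto)
    have hb3 : V.b1 ∈ dia N (dia N (dia N S)) := by rw [mem_dia_b1]; tauto
    have ea : ({.d, .c1, .b1, .a} : Set V) \ {.d, .c1, .b1} = {.a} := by
      ext y; cases y <;> simp
    have eb : ({.d, .c1, .b1} : Set V) \ {.d, .c1} = {.b1} := by
      ext y; cases y <;> simp
    have ra := (r3.diff hu r2).of_eq ea rfl
    have rb := (r2.diff hu r1).of_eq eb rfl
    have hba : V.b1 ∈ u {.a} := by rw [ra.2]; exact ⟨hb3, hb2⟩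
    -- every definable neighbour of `a` has an image seen from `b₁`
    have see (y : V) (hy : DN M {y}) (hay : V.a ∈ dia M {y}) : V.b1 ∈ dia N (u {y}) := by
      have h1 : ({.a} : Set V) ∪ dia M {y} = dia M {y} := by
        rw [Set.union_eq_right]; simpa using hay
      have h2 := hu.2.2.2.2.1 _ _ ra.1 hy.diam
      rw [h1, hu.2.2.2.2.2.2 _ hy] at h2
      rw [h2]
      exact Or.inl hba
    have disj (y z : V) (hy : DN M {y}) (hz : DN M {z}) (hyz : y ≠ z) (w : V)
        (h1 : w ∈ u {y}) (h2 : w ∈ u {z}) : False := by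
      have h := Corr.inter hu (⟨hy, rfl⟩ : Corr M u {y} _) (⟨hz, rfl⟩ : Corr M u {z} _)
      have h3 : ({y} : Set V) ∩ {z} = ∅ := by simpa using hyz.symm
      have h4 := h.2
      rw [h3, hu.2.2.1] at h4
      have : w ∈ u {y} ∩ u {z} := ⟨h1, h2⟩
      rw [← h4] at this
      exact this
    have s1 := see _ ra.1 (by simp [mem_dia_a])
    have s2 := see _ rb.1 (by simp [mem_dia_a])
    have s3 := see _ l0.1 (by simp [mem_dia_a])
    have s4 := see _ l1.1 (by simp [mem_dia_a])
    have d12 := disj _ _ ra.1 rb.1 (by simp)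
    have d13 := disj _ _ ra.1 l0.1 (by simp)
    have d14 := disj _ _ ra.1 l1.1 (by simp)
    have d23 := disj _ _ rb.1 l0.1 (by simp)
    have d24 := disj _ _ rb.1 l1.1 (by simp)
    have d34 := disj _ _ l0.1 l1.1 (by simp)
    rw [mem_dia_b1] at s1 s2 s3 s4
    grind
  · push Not at hx
    exact hSne.subset_singleton_iff.mp hx

/-! ### Propagation along the zigzag -/

section Zigzag

variable {K : Set ℕ} {j : ℕ}

/-- The upper neighbours of `ℓᵢ` other than `u_{i-1}`, where `i = j + 2` is even. -/
def upSet (K : Set ℕ) (j : ℕ) : Set V := (dia K {.l (j + 2)} ∩ lev5) \ {.u j}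

theorem upSet_of_mem (h : j + 2 ∈ K) :
    upSet K j = {.u (j + 1), .u (j + 2)} := by
  ext x
  cases x <;> simp [upSet, mem_dia_c2, mem_dia_u, mem_lev5]
  grind

theorem upSet_of_notMem (h : j + 2 ∉ K) :
    upSet K j = {.u (j + 1)} := by
  ext x
  cases x <;> simp [upSet, mem_dia_c2, mem_dia_u, mem_lev5]
  grind

/-- The lower vertices other than `ℓᵢ` adjacent to `upSet`, where `i = j + 2`. -/
def downSet (K : Set ℕ) (j : ℕ) : Set V := (dia K (upSet K j) ∩ lev4) \ {.l (j + 2)}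

theorem downSet_of_mem (hK : K ⊆ EE) (hj : Even j) (h : j + 2 ∈ K) :
    downSet K j = {.l (j + 3), .l (j + 4)} := by
  have h1 : j + 1 ∉ K := fun h => by have := (hK h).1; grind
  rw [downSet, upSet_of_mem h]
  ext x
  cases x <;> simp [mem_dia_b2, mem_dia_b3, mem_dia_l, mem_lev4]
  grind

theorem downSet_of_notMem (hK : K ⊆ EE) (hj : Even j) (h : j + 2 ∉ K) :
    downSet K j = {.l (j + 3)} := by
  have h1 : j + 1 ∉ K := fun h => by have := (hK h).1; grind
  rw [downSet, upSet_of_notMem h]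
  ext x
  cases x <;> simp [mem_dia_b2, mem_dia_b3, mem_dia_l, mem_lev4]
  grind

/-- When `i = j + 2` is in `K`, the vertex `uᵢ` is a leaf hanging off `ℓᵢ`, so it is not seen from
`downSet`. -/
theorem test_of_mem (hK : K ⊆ EE) (hj : Even j) (h : j + 2 ∈ K) :
    upSet K j \ dia K (downSet K j) = {.u (j + 1)} := by
  rw [upSet_of_mem h, downSet_of_mem hK hj h]
  ext x
  cases x <;> simp [mem_dia_u]
  grind

theorem test_of_notMem (hK : K ⊆ EE) (hj : Even j) (h : j + 2 ∉ K) :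
    upSet K j \ dia K (downSet K j) = ∅ := by
  rw [upSet_of_notMem h, downSet_of_notMem hK hj h]
  ext x
  cases x <;> simp [mem_dia_u]
  grind

/-- Separates `ℓ_{i+2}` from `ℓ_{i+1}`, where `i = j + 2`: only the former has upper neighbours
besides `uᵢ` and `u_{i+1}`.  This is what isolates `ℓ_{i+2}` when `i` is in `K`, as `downSet` is
then the pair of both. -/
theorem next_l_of_mem (hK : K ⊆ EE) (hj : Even j) :
    dia K ((dia K {.l (j + 3), .l (j + 4)} ∩ lev5) \ {.u (j + 1), .u (j + 2)}) ∩
      {.l (j + 3), .l (j + 4)} = {.l (j + 4)} := by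
  have h3 : j + 3 ∉ K := fun h => by have := (hK h).1; grind
  have e : (dia K {.l (j + 3), .l (j + 4)} ∩ lev5) \ {.u (j + 1), .u (j + 2)} =
      {x | x = .u (j + 3) ∨ (j + 4 ∈ K ∧ x = .u (j + 4))} := by
    ext x
    cases x <;> simp [mem_dia_c2, mem_dia_u, mem_lev5]
    grind
  rw [e]
  ext x
  cases x <;> simp [mem_dia_l]
  grind

theorem next_u_of_notMem (hK : K ⊆ EE) (hj : Even j) :
    (dia K {.l (j + 3)} ∩ lev5) \ {.u (j + 1)} = {.u (j + 2)} := by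
  have h3 : j + 3 ∉ K := fun h => by have := (hK h).1; grind
  ext x
  cases x <;> simp [mem_dia_c2, mem_dia_u, mem_lev5]
  grind

theorem next_l_of_notMem (hj : Even j) (h : j + 2 ∉ K) :
    (dia K {.u (j + 2)} ∩ lev4) \ {.l (j + 3)} = {.l (j + 4)} := by
  ext x
  cases x <;> simp [mem_dia_b2, mem_dia_b3, mem_dia_l, mem_lev4]
  grind

end Zigzag

/-- One turn of the zigzag: if `u` fixes `{ℓᵢ}` and `{u_{i-1}}` with `i = j + 2` even, then `M` and
`N` agree at `i`, and `u` fixes `{ℓ_{i+2}}` and `{u_{i+1}}`. -/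
theorem fix_step {M N : Set ℕ} (hM : M ⊆ EE) (hN : N ⊆ EE) {u : Set V → Set V}
    (hu : IsEmbedding M N u) (h4 : Corr M u lev4 lev4) (h5 : Corr M u lev5 lev5) {j : ℕ}
    (hj : Even j) (hl : Corr M u {.l (j + 2)} {.l (j + 2)}) (hv : Corr M u {.u j} {.u j}) :
    (j + 2 ∈ M ↔ j + 2 ∈ N) ∧
      Corr M u {.l (j + 4)} {.l (j + 4)} ∧ Corr M u {.u (j + 2)} {.u (j + 2)} := by
  have up : Corr M u (upSet M j) (upSet N j) := ((hl.dia hu).inter hu h5).diff hu hv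
  have down : Corr M u (downSet M j) (downSet N j) := ((up.dia hu).inter hu h4).diff hu hl
  have test := up.diff hu (down.dia hu)
  by_cases hm : j + 2 ∈ M <;> by_cases hn : j + 2 ∈ N
  · refine ⟨by simp [hm, hn], ?_⟩
    have up' := up.of_eq (upSet_of_mem hm) (upSet_of_mem hn)
    have down' := down.of_eq (downSet_of_mem hM hj hm) (downSet_of_mem hN hj hn)
    have test' := test.of_eq (test_of_mem hM hj hm) (test_of_mem hN hj hn)
    have e : ({.u (j + 1), .u (j + 2)} : Set V) \ {.u (j + 1)} = {.u (j + 2)} := by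
      ext x; cases x <;> simp
    refine ⟨?_, (up'.diff hu test').of_eq e e⟩
    exact (((((down'.dia hu).inter hu h5).diff hu up').dia hu).inter hu down').of_eq
      (next_l_of_mem hM hj) (next_l_of_mem hN hj)
  · exfalso
    have t := test.of_eq (test_of_mem hM hj hm) (test_of_notMem hN hj hn)
    have z : DN M ∅ := by simpa using (t.inter hu (t.compl hu)).1
    have := hu.2.1 _ _ t.1 z (by rw [t.2, hu.2.2.1])
    simp at this
  · exfalso
    have t := test.of_eq (test_of_notMem hM hj hm) (test_of_mem hN hj hn)
    have := t.2
    rw [hu.2.2.1] at this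
    simp at this
  · refine ⟨by simp [hm, hn], ?_⟩
    have up' := up.of_eq (upSet_of_notMem hm) (upSet_of_notMem hn)
    have down' := down.of_eq (downSet_of_notMem hM hj hm) (downSet_of_notMem hN hj hn)
    have nu := (((down'.dia hu).inter hu h5).diff hu up').of_eq
      (next_u_of_notMem hM hj) (next_u_of_notMem hN hj)
    exact ⟨(((nu.dia hu).inter hu h4).diff hu down').of_eq
      (next_l_of_notMem hj hm) (next_l_of_notMem hj hn), nu⟩

theorem eq_of_embedding {M N : Set ℕ} (hM : M ⊆ EE) (hN : N ⊆ EE) {u : Set V → Set V}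
    (hu : IsEmbedding M N u) : M = N := by
  obtain ⟨h4, h5, -, -, l2, u0⟩ := fix_base hM hN hu (image_d hM hu)
  have key (k : ℕ) : Corr M u {.l (2 * k + 2)} {.l (2 * k + 2)} ∧
      Corr M u {.u (2 * k)} {.u (2 * k)} := by
    induction k with
    | zero => exact ⟨l2, u0⟩
    | succ k ih => exact (fix_step hM hN hu h4 h5 (even_two_mul k) ih.1 ih.2).2
  have agree (k : ℕ) : 2 * k + 2 ∈ M ↔ 2 * k + 2 ∈ N :=
    (fix_step hM hN hu h4 h5 (even_two_mul k) (key k).1 (key k).2).1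
  have form {n : ℕ} (hn : n ∈ EE) : ∃ k, n = 2 * k + 2 := by
    obtain ⟨⟨m, rfl⟩, h⟩ := hn
    exact ⟨m - 1, by omega⟩
  ext n
  constructor <;> intro h
  · obtain ⟨k, rfl⟩ := form (hM h)
    exact (agree k).1 h
  · obtain ⟨k, rfl⟩ := form (hN h)
    exact (agree k).2 h

/-- For distinct `M, N ⊆ 𝔼` there cannot exist both an embedding of `D_M` into `D_N`
and an embedding of `D_N` into `D_M`. -/
theorem no_mutual_embeddings (M N : Set ℕ) (hM : M ⊆ EE) (hN : N ⊆ EE) (hMN : M ≠ N) :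
    ¬ ((∃ u : Set V → Set V, IsEmbedding M N u) ∧
       (∃ v : Set V → Set V, IsEmbedding N M v)) := by
  rintro ⟨⟨u, hu⟩, -⟩
  exact hMN (eq_of_embedding hM hN hu)
end

section
/- Let N ⊆ 𝔼, let F be an ultrafilter on a set I, and let S be a subalgebra of the ultrapower D_N^I/F (a set of F-germs of functions I → D_N, containing the germs of the constant functions ∅ and W and closed under the pointwise-lifted operations ∪, complement, and ◇_N). Suppose that for every s ∈ S with s ≠ (the germ of the constant ∅), the lifted ◇_N of s equals the germ of the constant W. Then either S = {germ of ∅, germ of W}, or there is a germ s such that S = {germ of ∅, s, the complement-germ of s, germ of W}; in particular S has at most 4 elements, so S is isomorphic to the complex algebra of 𝕂₁ or of 𝕂₂. -/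
/-- The germ in the ultrapower `(Set V)^I/F` of the constant function with value `Y`. -/
def cst {I : Type*} (F : Ultrafilter I) (Y : Set V) : Filter.Germ (F : Filter I) (Set V) :=
  ↑(fun _ : I => Y)

/-- A subalgebra `S` of the ultrapower `D_N^I/F`: a set of germs of `D_N`-valued
functions containing the germs of the constant functions `∅` and `W` and closed under
the pointwise-lifted operations `∪`, complement and `◇_N`. -/
def IsSubalgebra {I : Type*} (N : Set ℕ) (F : Ultrafilter I)
    (S : Set (Filter.Germ (F : Filter I) (Set V))) : Prop :=
  (∀ s ∈ S, ∃ f : I → Set V, (∀ i, DN N (f i)) ∧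
      s = (f : Filter.Germ (F : Filter I) (Set V))) ∧
  cst F ∅ ∈ S ∧
  cst F Set.univ ∈ S ∧
  (∀ s t, s ∈ S → t ∈ S → Filter.Germ.map₂ (· ∪ ·) s t ∈ S) ∧
  (∀ s ∈ S, Filter.Germ.map compl s ∈ S) ∧
  (∀ s ∈ S, Filter.Germ.map (dia N) s ∈ S)

theorem R_b3 {N : Set ℕ} {v : V} (h : R N v .b3) : v = .a ∨ v = .b3 := by
  rcases h with rfl | h | h
  · exact Or.inr rfl
  · cases h; exact Or.inl rfl
  · cases h

/-- Inclusion between elements of `S` only needs to be tested at `a` and `b₃`. -/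
theorem eventually_subset {N : Set ℕ} {I : Type*} {F : Ultrafilter I}
    {S : Set (Filter.Germ (F : Filter I) (Set V))}
    (hS : IsSubalgebra N F S)
    (h : ∀ s ∈ S, s ≠ cst F ∅ → Filter.Germ.map (dia N) s = cst F Set.univ)
    {f g : I → Set V} (hf : (f : Filter.Germ (F : Filter I) (Set V)) ∈ S)
    (hg : (g : Filter.Germ (F : Filter I) (Set V)) ∈ S)
    (ha : ∀ᶠ i in (F : Filter I), V.a ∈ f i → V.a ∈ g i)
    (hb : ∀ᶠ i in (F : Filter I), V.b3 ∈ f i → V.b3 ∈ g i) :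
    ∀ᶠ i in (F : Filter I), f i ⊆ g i := by
  obtain ⟨-, -, -, hU, hC, -⟩ := hS
  -- The difference `f \ g`, written with the operations of the algebra.
  have hd : ((fun i => ((f i)ᶜ ∪ g i)ᶜ : I → Set V) :
      Filter.Germ (F : Filter I) (Set V)) ∈ S := hC _ (hU _ _ (hC _ hf) hg)
  by_cases h0 : ((fun i => ((f i)ᶜ ∪ g i)ᶜ : I → Set V) :
      Filter.Germ (F : Filter I) (Set V)) = cst F ∅
  · filter_upwards [Filter.Germ.coe_eq.1 h0] with i hi x hx
    by_contra hxg
    have : x ∈ ((f i)ᶜ ∪ g i)ᶜ := by simp [hx, hxg]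
    rw [hi] at this
    exact this
  · have h1 := Filter.Germ.coe_eq.1 (h _ hd h0)
    obtain ⟨i, hi, hai, hbi⟩ := (h1.and (ha.and hb)).exists
    have hmem : V.b3 ∈ dia N ((f i)ᶜ ∪ g i)ᶜ := by
      have hi' : dia N ((f i)ᶜ ∪ g i)ᶜ = Set.univ := hi
      rw [hi']; trivial
    obtain ⟨v, hv, hR⟩ := hmem
    rcases R_b3 hR with rfl | rfl <;> simp at hv <;> tauto

theorem germ_eq {N : Set ℕ} {I : Type*} {F : Ultrafilter I}
    {S : Set (Filter.Germ (F : Filter I) (Set V))}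
    (hS : IsSubalgebra N F S)
    (h : ∀ s ∈ S, s ≠ cst F ∅ → Filter.Germ.map (dia N) s = cst F Set.univ)
    {f g : I → Set V} (hf : (f : Filter.Germ (F : Filter I) (Set V)) ∈ S)
    (hg : (g : Filter.Germ (F : Filter I) (Set V)) ∈ S)
    (ha : ∀ᶠ i in (F : Filter I), V.a ∈ f i ↔ V.a ∈ g i)
    (hb : ∀ᶠ i in (F : Filter I), V.b3 ∈ f i ↔ V.b3 ∈ g i) :
    (f : Filter.Germ (F : Filter I) (Set V)) = g := by
  refine Filter.Germ.coe_eq.2 ?_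
  filter_upwards [eventually_subset hS h hf hg (ha.mono fun _ => Iff.mp) (hb.mono fun _ => Iff.mp),
    eventually_subset hS h hg hf (ha.mono fun _ => Iff.mpr) (hb.mono fun _ => Iff.mpr)]
    with i h1 h2 using Set.Subset.antisymm h1 h2

/-- If every nonzero element of a subalgebra `S` of the ultrapower `D_N^I/F` satisfies
`◇x = 1`, then `S = {0, 1}` or `S = {0, s, ¬s, 1}` for some germ `s`; in particular
`S` has at most 4 elements, so `S` is isomorphic to the complex algebra of `𝕂₁` or of
`𝕂₂`. -/
theorem small_subalgebra (N : Set ℕ) (hN : N ⊆ EE)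
    {I : Type*} (F : Ultrafilter I)
    (S : Set (Filter.Germ (F : Filter I) (Set V)))
    (hS : IsSubalgebra N F S)
    (h : ∀ s ∈ S, s ≠ cst F ∅ → Filter.Germ.map (dia N) s = cst F Set.univ) :
    S = {cst F ∅, cst F Set.univ} ∨
    ∃ s : Filter.Germ (F : Filter I) (Set V),
      S = {cst F ∅, s, Filter.Germ.map compl s, cst F Set.univ} := by
  have h0 : cst F ∅ ∈ S := hS.2.1
  have h1 : cst F Set.univ ∈ S := hS.2.2.1
  have hC : ∀ s ∈ S, Filter.Germ.map compl s ∈ S := hS.2.2.2.2.1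
  have em (v : V) (f : I → Set V) :
      (∀ᶠ i in (F : Filter I), v ∈ f i) ∨ (∀ᶠ i in (F : Filter I), v ∉ f i) := by
    rw [Ultrafilter.eventually_not]; exact Classical.em _
  -- A germ in `S` with equal bits at `a` and `b₃` is trivial.
  have key0 (f : I → Set V) (hf : (f : Filter.Germ (F : Filter I) (Set V)) ∈ S)
      (ha : ∀ᶠ i in (F : Filter I), V.a ∉ f i) (hb : ∀ᶠ i in (F : Filter I), V.b3 ∉ f i) :
      (f : Filter.Germ (F : Filter I) (Set V)) = cst F ∅ :=
    germ_eq hS h hf h0 (ha.mono fun _ hi => by simp [hi]) (hb.mono fun _ hi => by simp [hi])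
  have key1 (f : I → Set V) (hf : (f : Filter.Germ (F : Filter I) (Set V)) ∈ S)
      (ha : ∀ᶠ i in (F : Filter I), V.a ∈ f i) (hb : ∀ᶠ i in (F : Filter I), V.b3 ∈ f i) :
      (f : Filter.Germ (F : Filter I) (Set V)) = cst F Set.univ :=
    germ_eq hS h hf h1 (ha.mono fun _ hi => by simp [hi]) (hb.mono fun _ hi => by simp [hi])
  -- If some germ in `S` contains `a` but not `b₃`, it generates `S`.
  have mixed (f : I → Set V) (hf : (f : Filter.Germ (F : Filter I) (Set V)) ∈ S)
      (ha : ∀ᶠ i in (F : Filter I), V.a ∈ f i) (hb : ∀ᶠ i in (F : Filter I), V.b3 ∉ f i) :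
      S = {cst F ∅, ↑f, Filter.Germ.map compl ↑f, cst F Set.univ} := by
    refine Set.Subset.antisymm (fun t ht => ?_) ?_
    · induction t using Filter.Germ.inductionOn with | _ g
      rcases em .a g with ga | ga <;> rcases em .b3 g with gb | gb
      · exact Or.inr (Or.inr (Or.inr (key1 g ht ga gb)))
      · refine Or.inr (Or.inl (germ_eq hS h ht hf ?_ ?_))
        · filter_upwards [ga, ha] with i x y using iff_of_true x y
        · filter_upwards [gb, hb] with i x y using iff_of_false x y
      · refine Or.inr (Or.inr (Or.inl (germ_eq (g := fun i => (f i)ᶜ) hS h ht (hC _ hf) ?_ ?_)))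
        · filter_upwards [ga, ha] with i x y using iff_of_false x (not_not_intro y)
        · filter_upwards [gb, hb] with i x y using iff_of_true x y
      · exact Or.inl (key0 g ht ga gb)
    · rintro t (rfl | rfl | rfl | rfl)
      exacts [h0, hf, hC _ hf, h1]
  by_cases hex : ∃ f : I → Set V, (f : Filter.Germ (F : Filter I) (Set V)) ∈ S ∧
      (∀ᶠ i in (F : Filter I), V.a ∈ f i) ∧ (∀ᶠ i in (F : Filter I), V.b3 ∉ f i)
  · obtain ⟨f, hf, ha, hb⟩ := hex
    exact Or.inr ⟨f, mixed f hf ha hb⟩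
  · refine Or.inl (Set.Subset.antisymm (fun t ht => ?_) ?_)
    · induction t using Filter.Germ.inductionOn with | _ g
      rcases em .a g with ga | ga <;> rcases em .b3 g with gb | gb
      · exact Or.inr (key1 g ht ga gb)
      · exact absurd ⟨g, ht, ga, gb⟩ hex
      -- The complement of `g` contains `a` but not `b₃`.
      · exact absurd ⟨fun i => (g i)ᶜ, hC _ ht, ga, gb.mono fun _ hi => not_not_intro hi⟩ hex
      · exact Or.inl (key0 g ht ga gb)
    · rintro t (rfl | rfl)
      exacts [h0, h1]
end

section
/- Let N ⊆ 𝔼, let F be an ultrafilter on a set I, let S be a subalgebra of the ultrapower D_N^I/F, and let X : I → (subsets of W) with X(i) ∈ D_N for all i, whose germ lies in S and satisfies {i ∈ I : X(i) ≠ ∅} ∈ F and {i ∈ I : X(i) ∩ {b₁, c₁, d} = ∅} ∈ F. Then the germ of the constant function with value {d} belongs to S. -/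
/-- Any set containing `a` and disjoint from `P` determines `{d}` by the term `∼◇◇Z`. -/
lemma compl_dia_dia {N : Set ℕ} {Z : Set V} (ha : V.a ∈ Z)
    (hP : Z ∩ {V.b1, V.c1, V.d} = ∅) : (dia N (dia N Z))ᶜ = {V.d} := by
  have hb1 : V.b1 ∉ Z := fun h => (Set.ext_iff.mp hP V.b1).mp ⟨h, by simp⟩
  have hc1 : V.c1 ∉ Z := fun h => (Set.ext_iff.mp hP V.c1).mp ⟨h, by simp⟩
  have hd : V.d ∉ Z := fun h => (Set.ext_iff.mp hP V.d).mp ⟨h, by simp⟩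
  have two : ∀ {v w : V}, R N V.a v → R N v w → w ∈ dia N (dia N Z) :=
    fun h1 h2 => ⟨_, ⟨_, ha, h1⟩, h2⟩
  ext w
  simp only [Set.mem_compl_iff, Set.mem_singleton_iff]
  constructor
  · intro hw
    by_contra hne
    apply hw
    cases w with
    | a => exact two (.inl rfl) (.inl rfl)
    | b1 => exact two (.inr (.inl .ab1)) (.inl rfl)
    | b2 => exact two (.inr (.inl .ab2)) (.inl rfl)
    | b3 => exact two (.inr (.inl .ab3)) (.inl rfl)
    | c1 => exact two (.inr (.inl .ab1)) (.inr (.inl .b1c1))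
    | c2 => exact two (.inr (.inl .ab2)) (.inr (.inl .b2c2))
    | d => exact absurd rfl hne
    | u n => exact two (.inr (.inl (.al (n + 1)))) (.inr (.inl (.lu n)))
    | l n => exact two (.inr (.inl (.al n))) (.inl rfl)
  · rintro rfl ⟨v, ⟨x, hx, hxv⟩, hv⟩
    rcases hv with rfl | hv | hv <;> [skip; cases hv; cases hv] <;>
      rcases hxv with rfl | h | h <;> first | contradiction | (cases h <;> contradiction)

/-- From outside, `P` can be reached in one step only from `a`. -/
lemma disjoint_dia {N : Set ℕ} {Z : Set V} (ha : V.a ∉ Z)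
    (hP : Z ∩ {V.b1, V.c1, V.d} = ∅) : dia N Z ∩ {V.b1, V.c1, V.d} = ∅ := by
  have hb1 : V.b1 ∉ Z := fun h => (Set.ext_iff.mp hP V.b1).mp ⟨h, by simp⟩
  have hc1 : V.c1 ∉ Z := fun h => (Set.ext_iff.mp hP V.c1).mp ⟨h, by simp⟩
  have hd : V.d ∉ Z := fun h => (Set.ext_iff.mp hP V.d).mp ⟨h, by simp⟩
  rw [Set.eq_empty_iff_forall_notMem]
  rintro w ⟨⟨x, hx, hxw⟩, rfl | rfl | rfl⟩ <;>
    rcases hxw with rfl | h | h <;> first | contradiction | (cases h <;> contradiction)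

lemma a_mem_dia_dia {N : Set ℕ} {Z : Set V} (hne : Z ≠ ∅)
    (hP : Z ∩ {V.b1, V.c1, V.d} = ∅) : V.a ∈ dia N (dia N Z) := by
  obtain ⟨z, hz⟩ := Set.nonempty_iff_ne_empty.mpr hne
  have two : ∀ {v : V}, R N z v → R N v V.a → V.a ∈ dia N (dia N Z) :=
    fun h1 h2 => ⟨_, ⟨z, hz, h1⟩, h2⟩
  have hzP : z ∉ ({V.b1, V.c1, V.d} : Set V) := fun h => (Set.ext_iff.mp hP z).mp ⟨hz, h⟩
  cases z with
  | a => exact two (.inl rfl) (.inl rfl)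
  | b1 => simp at hzP
  | b2 => exact two (.inl rfl) (.inr (.inr .ab2))
  | b3 => exact two (.inl rfl) (.inr (.inr .ab3))
  | c1 => simp at hzP
  | c2 => exact two (.inr (.inr .b2c2)) (.inr (.inr .ab2))
  | d => simp at hzP
  | u n => exact two (.inr (.inr (.lu n))) (.inr (.inr (.al (n + 1))))
  | l n => exact two (.inl rfl) (.inr (.inr (.al n)))

lemma compl_iterate_dia {N : Set ℕ} {Z : Set V} (hne : Z ≠ ∅)
    (hP : Z ∩ {V.b1, V.c1, V.d} = ∅) :
    (dia N (dia N Z))ᶜ = {V.d} ∨ (dia N (dia N (dia N Z)))ᶜ = {V.d} ∨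
      (dia N (dia N (dia N (dia N Z))))ᶜ = {V.d} := by
  by_cases h0 : V.a ∈ Z
  · exact .inl (compl_dia_dia h0 hP)
  have hP1 := disjoint_dia (N := N) h0 hP
  by_cases h1 : V.a ∈ dia N Z
  · exact .inr (.inl (compl_dia_dia h1 hP1))
  · exact .inr (.inr (compl_dia_dia (a_mem_dia_dia hne hP) (disjoint_dia h1 hP1)))

/-- If a subalgebra `S` of the ultrapower `D_N^I/F` contains the germ of a function
`X` that is `F`-a.e. nonempty and `F`-a.e. disjoint from `P = {b₁, c₁, d}`, then `S`
contains the germ of the constant function with value `{d}`. -/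
theorem const_d_mem_of_disjoint_P (N : Set ℕ) (hN : N ⊆ EE)
    {I : Type*} (F : Ultrafilter I)
    (S : Set (Filter.Germ (F : Filter I) (Set V)))
    (hS : IsSubalgebra N F S)
    (X : I → Set V) (hXD : ∀ i, DN N (X i))
    (hXS : (X : Filter.Germ (F : Filter I) (Set V)) ∈ S)
    (hne : {i | X i ≠ ∅} ∈ F)
    (hP : {i | X i ∩ {V.b1, V.c1, V.d} = ∅} ∈ F) :
    cst F {V.d} ∈ S := by
  obtain ⟨-, -, -, -, hcompl, hdia⟩ := hS
  have key : ∀ᶠ i in (F : Filter I), (dia N (dia N (X i)))ᶜ = {V.d} ∨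
      (dia N (dia N (dia N (X i))))ᶜ = {V.d} ∨
      (dia N (dia N (dia N (dia N (X i)))))ᶜ = {V.d} := by
    filter_upwards [hne, hP] with i h1 h2 using compl_iterate_dia h1 h2
  have h2 := hdia _ (hdia _ hXS)
  have h3 := hdia _ h2
  have h4 := hdia _ h3
  -- A germ in `S` whose representative is almost everywhere `{d}` is the constant germ.
  have fin : ∀ f : I → Set V, (f : Filter.Germ (F : Filter I) (Set V)) ∈ S →
      (∀ᶠ i in (F : Filter I), f i = {V.d}) → cst F {V.d} ∈ S := by
    intro f hf h
    have e : (f : Filter.Germ (F : Filter I) (Set V)) = cst F {V.d} := Filter.Germ.coe_eq.mpr h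
    exact e ▸ hf
  rcases Ultrafilter.eventually_or.mp key with h | h
  · exact fin _ (hcompl _ h2) h
  rcases Ultrafilter.eventually_or.mp h with h | h
  · exact fin _ (hcompl _ h3) h
  · exact fin _ (hcompl _ h4) h
end
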